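/- arXiv:1712.03412 — 2 statements merged into one kernel-verified Lean document; each statement's English description precedes it below -/
import Mathlib

section
/- Let β̂ be the elastic-net estimator, let β* ∈ ℝ^p with support H = {j : β*_j ≠ 0}, set z* = ‖ℓ̇(β*) + 2λ₂·β*‖_∞ and Δ = β̂ − β*. If z* ≤ ((ζ−1)/(ζ+1))·λ₁ for some ζ > 1, then (2λ₁/(ζ+1))·‖Δ_{H^c}‖₁ ≤ Δᵀ·[ℓ̇(β̂) − ℓ̇(β*) + 2λ₂·Δ] + (2λ₁/(ζ+1))·‖Δ_{H^c}‖₁ ≤ (2ζλ₁/(ζ+1))·‖Δ_H‖₁; in particular, ‖Δ_{H^c}‖₁ ≤ ζ·‖Δ_H‖₁. -/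
/-!
The ridge term belongs with the smooth part of the objective: `f = ℓ + λ₂‖·‖₂²` has gradient
`G = ℓ̇ + 2λ₂·id`, which is a monotone operator, so `β̂` is an `ℓ¹`-penalised minimiser of `f` and
the claim is about `⟨Δ, G β̂ - G β*⟩`. This quantity is nonnegative by monotonicity. For the upper
bound, comparing `β̂` with the points of the segment towards `β*` gives
`⟨Δ, G β̂⟩ ≤ λ₁(‖β*‖₁ - ‖β̂‖₁) ≤ λ₁(‖Δ_H‖₁ - ‖Δ_{Hᶜ}‖₁)`, while Hölder's inequality gives
`-⟨Δ, G β*⟩ ≤ ‖G β*‖_∞ (‖Δ_H‖₁ + ‖Δ_{Hᶜ}‖₁)`.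
-/

open Real BigOperators Finset MeasureTheory

/-- Inner product of a row of the design matrix with a coefficient vector. -/
def dotp {p : ℕ} (u v : Fin p → ℝ) : ℝ := ∑ j, u j * v j

/-- Average negative binomial negative log-likelihood. -/
noncomputable def negLogLik (n p : ℕ) (θ : ℝ) (x : Fin n → Fin p → ℝ)
    (y : Fin n → ℝ) (β : Fin p → ℝ) : ℝ :=
  -(1 / (n : ℝ)) *
    ∑ i, (y i * dotp (x i) β - (θ + y i) * Real.log (θ + Real.exp (dotp (x i) β)))

/-- Elastic-net objective function. -/
noncomputable def enObj (n p : ℕ) (θ : ℝ) (x : Fin n → Fin p → ℝ) (y : Fin n → ℝ)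
    (lam1 lam2 : ℝ) (β : Fin p → ℝ) : ℝ :=
  negLogLik n p θ x y β + lam1 * ∑ j, |β j| + lam2 * ∑ j, (β j) ^ 2

/-- `j`-th component of the gradient of the average negative log-likelihood. -/
noncomputable def gradComp (n p : ℕ) (θ : ℝ) (x : Fin n → Fin p → ℝ) (y : Fin n → ℝ)
    (β : Fin p → ℝ) (j : Fin p) : ℝ :=
  (1 / (n : ℝ)) *
    ∑ i, x i j * θ * (Real.exp (dotp (x i) β) - y i) / (θ + Real.exp (dotp (x i) β))

section FirstOrderCondition

variable {E : Type*} [AddCommGroup E] [Module ℝ E]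

theorem le_lineDeriv_add_of_isMinOn_add {f g : E → ℝ} {s : Set E} {x z : E} {f' : ℝ}
    (hmin : IsMinOn (fun w => f w + g w) s x) (hg : ConvexOn ℝ s g)
    (hx : x ∈ s) (hz : z ∈ s) (hf : HasLineDerivAt ℝ f f' x (z - x)) :
    g x ≤ f' + g z := by
  suffices g x - g z ≤ f' by linarith
  refine ge_of_tendsto hf.tendsto_slope_zero_right ?_
  filter_upwards [Ioo_mem_nhdsGT one_pos] with t ⟨ht₀, ht₁⟩
  have hpoint : x + t • (z - x) = (1 - t) • x + t • z := by module
  have hmem : (1 - t) • x + t • z ∈ s := hg.1 hx hz (by linarith) ht₀.le (by ring)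
  have hconv : g ((1 - t) • x + t • z) ≤ (1 - t) * g x + t * g z :=
    hg.2 hx hz (by linarith) ht₀.le (by ring)
  have hle : f x + g x ≤ f ((1 - t) • x + t • z) + g ((1 - t) • x + t • z) := hmin hmem
  rw [hpoint, smul_eq_mul, le_inv_mul_iff₀ ht₀]
  linarith

end FirstOrderCondition

section Vectors

variable {ι : Type*} [Fintype ι]

theorem convexOn_sum_abs : ConvexOn ℝ Set.univ (fun u : ι → ℝ => ∑ j, |u j|) := by
  refine ⟨convex_univ, fun u _ v _ a b ha hb _ => ?_⟩
  simp only [smul_eq_mul, Finset.mul_sum, ← Finset.sum_add_distrib]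
  refine Finset.sum_le_sum fun j _ => (abs_add_le _ _).trans_eq ?_
  simp only [Pi.smul_apply, smul_eq_mul, abs_mul, abs_of_nonneg ha, abs_of_nonneg hb]

theorem abs_dotProduct_le_mul_sum_abs {u v : ι → ℝ} {c : ℝ} (hv : ∀ j, |v j| ≤ c) :
    |u ⬝ᵥ v| ≤ c * ∑ j, |u j| := by
  rw [Finset.mul_sum]
  refine (Finset.abs_sum_le_sum_abs _ _).trans (Finset.sum_le_sum fun j _ => ?_)
  rw [abs_mul, mul_comm]
  exact mul_le_mul_of_nonneg_right (hv j) (abs_nonneg _)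

theorem sum_abs_sub_sum_abs_le_of_eq_zero [DecidableEq ι] {u v : ι → ℝ} {H : Finset ι}
    (hu : ∀ j ∉ H, u j = 0) :
    ∑ j, |u j| - ∑ j, |v j| ≤ ∑ j ∈ H, |v j - u j| - ∑ j ∈ Hᶜ, |v j - u j| := by
  have hon : ∑ j ∈ H, (|u j| - |v j|) ≤ ∑ j ∈ H, |v j - u j| :=
    Finset.sum_le_sum fun j _ => abs_sub_comm (v j) (u j) ▸ abs_sub_abs_le_abs_sub _ _
  have hoff : ∑ j ∈ Hᶜ, (|u j| - |v j|) = -∑ j ∈ Hᶜ, |v j - u j| := by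
    rw [← Finset.sum_neg_distrib]
    refine Finset.sum_congr rfl fun j hj => ?_
    simp [hu j (Finset.mem_compl.1 hj)]
  rw [← Finset.sum_sub_distrib, ← Finset.sum_add_sum_compl H, hoff]
  linarith

end Vectors

section Gradients

variable {ι κ : Type*} [Fintype ι] [Fintype κ]

/-- `g` is the gradient of `f` in coordinates: the derivative of `f` at `β` in the direction `v`
is `⟨g β, v⟩`. Only directional derivatives are required, so no norm on `ι → ℝ` is involved. -/
def HasGradientField (f : (ι → ℝ) → ℝ) (g : (ι → ℝ) → ι → ℝ) : Prop :=
  ∀ β v, HasLineDerivAt ℝ f (g β ⬝ᵥ v) β v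

/-- Monotone operators in the sense of convex analysis. A differentiable function is convex exactly
when its gradient is one, so this is how convexity of a loss is expressed here. -/
def IsMonotoneOperator (g : (ι → ℝ) → ι → ℝ) : Prop :=
  ∀ u v, 0 ≤ (u - v) ⬝ᵥ (g u - g v)

theorem HasGradientField.add {f₁ f₂ : (ι → ℝ) → ℝ} {g₁ g₂ : (ι → ℝ) → ι → ℝ}
    (h₁ : HasGradientField f₁ g₁) (h₂ : HasGradientField f₂ g₂) :
    HasGradientField (fun β => f₁ β + f₂ β) (fun β => g₁ β + g₂ β) := fun β v =>
  (HasDerivAt.add (h₁ β v) (h₂ β v)).congr_deriv (add_dotProduct _ _ _).symm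

theorem IsMonotoneOperator.add {g₁ g₂ : (ι → ℝ) → ι → ℝ}
    (h₁ : IsMonotoneOperator g₁) (h₂ : IsMonotoneOperator g₂) :
    IsMonotoneOperator (fun β => g₁ β + g₂ β) := fun u v => by
  rw [add_sub_add_comm, dotProduct_add]
  exact add_nonneg (h₁ u v) (h₂ u v)

theorem hasGradientField_mul_sum_sq (c : ℝ) :
    HasGradientField (fun β : ι → ℝ => c * ∑ j, β j ^ 2) (fun β => (2 * c) • β) := fun β v => by
  have hcoord (j : ι) : HasDerivAt (fun t : ℝ => (β j + t * v j) ^ 2) (2 * (β j * v j)) 0 :=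
    ((((hasDerivAt_id (0 : ℝ)).mul_const (v j)).const_add (β j)).pow 2).congr_deriv
      (by simp; ring)
  refine ((HasDerivAt.fun_sum fun j _ => hcoord j).const_mul c).congr_deriv ?_
  rw [← Finset.mul_sum, smul_dotProduct, smul_eq_mul, dotProduct]
  ring

theorem isMonotoneOperator_smul {c : ℝ} (hc : 0 ≤ c) :
    IsMonotoneOperator (fun β : ι → ℝ => c • β) := fun u v => by
  rw [← smul_sub, dotProduct_smul]
  exact mul_nonneg hc (Finset.sum_nonneg fun j _ => mul_self_nonneg _)

theorem hasGradientField_mul_sum_comp_dotProduct (c : ℝ) (X : κ → ι → ℝ) {φ φ' : κ → ℝ → ℝ}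
    (hφ : ∀ i s, HasDerivAt (φ i) (φ' i s) s) :
    HasGradientField (fun β => c * ∑ i, φ i (X i ⬝ᵥ β))
      (fun β => c • ∑ i, φ' i (X i ⬝ᵥ β) • X i) := fun β v => by
  have hline (i : κ) : HasDerivAt (fun t : ℝ => X i ⬝ᵥ (β + t • v)) (X i ⬝ᵥ v) 0 := by
    simp only [dotProduct_add, dotProduct_smul, smul_eq_mul]
    exact (hasDerivAt_mul_const _).const_add _
  have hterm (i : κ) : HasDerivAt (fun t : ℝ => φ i (X i ⬝ᵥ (β + t • v)))
      (φ' i (X i ⬝ᵥ β) * (X i ⬝ᵥ v)) 0 :=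
    HasDerivAt.comp 0 (by simpa using hφ i (X i ⬝ᵥ β)) (hline i)
  refine ((HasDerivAt.fun_sum fun i _ => hterm i).const_mul c).congr_deriv ?_
  simp only [smul_dotProduct, sum_dotProduct, smul_eq_mul]

theorem isMonotoneOperator_smul_sum_comp_dotProduct {c : ℝ} (hc : 0 ≤ c) (X : κ → ι → ℝ)
    {ψ : κ → ℝ → ℝ} (hψ : ∀ i, Monotone (ψ i)) :
    IsMonotoneOperator (fun β => c • ∑ i, ψ i (X i ⬝ᵥ β) • X i) := fun u v => by
  simp only [← smul_sub, ← Finset.sum_sub_distrib, ← sub_smul, dotProduct_smul, dotProduct_sum,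
    smul_eq_mul]
  refine mul_nonneg hc (Finset.sum_nonneg fun i _ => ?_)
  rw [dotProduct_comm (u - v), dotProduct_sub]
  exact ((hψ i).monovary monotone_id).sub_mul_sub_nonneg _ _

end Gradients

section PenalisedEstimator

variable {ι : Type*} [Fintype ι] {f : (ι → ℝ) → ℝ} {g : (ι → ℝ) → ι → ℝ} {b b₀ : ι → ℝ} {lam : ℝ}

theorem HasGradientField.dotProduct_le_of_isMinOn_add_l1 (hf : HasGradientField f g)
    (hlam : 0 ≤ lam) (hmin : IsMinOn (fun β => f β + lam * ∑ j, |β j|) Set.univ b) :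
    (b - b₀) ⬝ᵥ g b ≤ lam * (∑ j, |b₀ j| - ∑ j, |b j|) := by
  have hfirst : lam * ∑ j, |b j| ≤ g b ⬝ᵥ (b₀ - b) + lam * ∑ j, |b₀ j| :=
    le_lineDeriv_add_of_isMinOn_add (f := f) (g := fun β => lam * ∑ j, |β j|) hmin
      (convexOn_sum_abs.smul hlam) (Set.mem_univ _) (Set.mem_univ _) (hf b (b₀ - b))
  rw [← neg_sub b b₀, dotProduct_neg, dotProduct_comm] at hfirst
  linarith

theorem HasGradientField.dotProduct_sub_add_le_of_isMinOn_add_l1 [DecidableEq ι]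
    (hf : HasGradientField f g) (hlam : 0 ≤ lam)
    (hmin : IsMinOn (fun β => f β + lam * ∑ j, |β j|) Set.univ b)
    {H : Finset ι} (hH : ∀ j ∉ H, b₀ j = 0) {c : ℝ} (hc : ∀ j, |g b₀ j| ≤ c) :
    (b - b₀) ⬝ᵥ (g b - g b₀) + (lam - c) * ∑ j ∈ Hᶜ, |b j - b₀ j|
      ≤ (lam + c) * ∑ j ∈ H, |b j - b₀ j| := by
  have hopt : (b - b₀) ⬝ᵥ g b ≤ lam * (∑ j ∈ H, |b j - b₀ j| - ∑ j ∈ Hᶜ, |b j - b₀ j|) :=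
    (hf.dotProduct_le_of_isMinOn_add_l1 hlam hmin).trans
      (mul_le_mul_of_nonneg_left (sum_abs_sub_sum_abs_le_of_eq_zero hH) hlam)
  have hnoise : -((b - b₀) ⬝ᵥ g b₀)
      ≤ c * (∑ j ∈ H, |b j - b₀ j| + ∑ j ∈ Hᶜ, |b j - b₀ j|) := by
    rw [Finset.sum_add_sum_compl]
    exact (neg_le_abs _).trans (abs_dotProduct_le_mul_sum_abs hc)
  rw [dotProduct_sub]
  linarith

theorem stmt3_general [DecidableEq ι] (hf : HasGradientField f g) (hg : IsMonotoneOperator g)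
    {lam1 lam2 : ℝ} (hlam1 : 0 < lam1) (hlam2 : 0 ≤ lam2)
    (hmin : ∀ β, f b + lam1 * ∑ j, |b j| + lam2 * ∑ j, b j ^ 2
      ≤ f β + lam1 * ∑ j, |β j| + lam2 * ∑ j, β j ^ 2)
    {H : Finset ι} (hH : ∀ j ∉ H, b₀ j = 0) {ζ : ℝ} (hζ : -1 < ζ)
    (hnoise : ∀ j, |g b₀ j + 2 * lam2 * b₀ j| ≤ (ζ - 1) / (ζ + 1) * lam1) :
    ((2 * lam1 / (ζ + 1)) * (∑ j ∈ Hᶜ, |b j - b₀ j|) ≤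
        (∑ j, (b j - b₀ j) * (g b j - g b₀ j + 2 * lam2 * (b j - b₀ j)))
          + (2 * lam1 / (ζ + 1)) * (∑ j ∈ Hᶜ, |b j - b₀ j|) ∧
      (∑ j, (b j - b₀ j) * (g b j - g b₀ j + 2 * lam2 * (b j - b₀ j)))
          + (2 * lam1 / (ζ + 1)) * (∑ j ∈ Hᶜ, |b j - b₀ j|)
        ≤ (2 * ζ * lam1 / (ζ + 1)) * (∑ j ∈ H, |b j - b₀ j|)) ∧
    (∑ j ∈ Hᶜ, |b j - b₀ j|) ≤ ζ * (∑ j ∈ H, |b j - b₀ j|) := by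
  have hζ' : 0 < ζ + 1 := by linarith
  let G : (ι → ℝ) → ι → ℝ := fun β => g β + (2 * lam2) • β
  have hmin' : IsMinOn (fun β => (f β + lam2 * ∑ j, β j ^ 2) + lam1 * ∑ j, |β j|) Set.univ b :=
    isMinOn_univ_iff.2 fun β => by linarith [hmin β]
  have hpair : ∑ j, (b j - b₀ j) * (g b j - g b₀ j + 2 * lam2 * (b j - b₀ j))
      = (b - b₀) ⬝ᵥ (G b - G b₀) :=
    Finset.sum_congr rfl fun j _ => by
      simp only [G, Pi.sub_apply, Pi.add_apply, Pi.smul_apply, smul_eq_mul]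
      ring
  have hlower : 0 ≤ (b - b₀) ⬝ᵥ (G b - G b₀) :=
    hg.add (isMonotoneOperator_smul (by positivity)) b b₀
  have hupper := (hf.add (hasGradientField_mul_sum_sq lam2)).dotProduct_sub_add_le_of_isMinOn_add_l1
    hlam1.le hmin' hH hnoise
  rw [show lam1 - (ζ - 1) / (ζ + 1) * lam1 = 2 * lam1 / (ζ + 1) by field_simp; ring,
    show lam1 + (ζ - 1) / (ζ + 1) * lam1 = 2 * ζ * lam1 / (ζ + 1) by field_simp; ring] at hupper
  rw [hpair]
  refine ⟨⟨le_add_of_nonneg_left hlower, hupper⟩, ?_⟩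
  have hcone : 2 * lam1 / (ζ + 1) * ∑ j ∈ Hᶜ, |b j - b₀ j|
      ≤ 2 * lam1 / (ζ + 1) * (ζ * ∑ j ∈ H, |b j - b₀ j|) :=
    calc _ ≤ 2 * ζ * lam1 / (ζ + 1) * ∑ j ∈ H, |b j - b₀ j| := by linarith
      _ = _ := by ring
  exact le_of_mul_le_mul_left hcone (by positivity)

end PenalisedEstimator

section NegativeBinomial

/-- Negative log-likelihood of a single negative binomial response `y` with dispersion `θ` and
mean `exp s`, up to terms that do not depend on the linear predictor `s`. -/
noncomputable def nbLoss (θ y s : ℝ) : ℝ :=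
  (θ + y) * Real.log (θ + Real.exp s) - y * s

/-- Derivative of `nbLoss θ y` with respect to the linear predictor, the negated score. -/
noncomputable def nbLossDeriv (θ y s : ℝ) : ℝ :=
  θ * (Real.exp s - y) / (θ + Real.exp s)

variable {θ : ℝ}

theorem hasDerivAt_nbLoss (hθ : 0 < θ) (y s : ℝ) :
    HasDerivAt (nbLoss θ y) (nbLossDeriv θ y s) s := by
  have hpos : 0 < θ + Real.exp s := by positivity
  refine (((((Real.hasDerivAt_exp s).const_add θ).log hpos.ne').const_mul (θ + y)).sub
    ((hasDerivAt_id s).const_mul y)).congr_deriv ?_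
  rw [nbLossDeriv]
  field_simp
  ring

theorem monotone_nbLossDeriv (hθ : 0 < θ) {y : ℝ} (hy : 0 ≤ y) : Monotone (nbLossDeriv θ y) := by
  have hform (s : ℝ) : nbLossDeriv θ y s = θ - θ * (θ + y) / (θ + Real.exp s) := by
    have hpos : θ + Real.exp s ≠ 0 := by positivity
    rw [nbLossDeriv, eq_sub_iff_add_eq, ← add_div, div_eq_iff hpos]
    ring
  intro s t hst
  rw [hform, hform]
  gcongr

variable {n p : ℕ} (x : Fin n → Fin p → ℝ) {y : Fin n → ℝ}

theorem negLogLik_eq_mul_sum_nbLoss (θ : ℝ) (y : Fin n → ℝ) :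
    negLogLik n p θ x y = fun β => 1 / (n : ℝ) * ∑ i, nbLoss θ (y i) (x i ⬝ᵥ β) := by
  funext β
  rw [negLogLik, neg_mul, ← mul_neg, ← Finset.sum_neg_distrib]
  simp only [neg_sub, nbLoss, dotp, dotProduct]

theorem gradComp_eq_smul_sum_nbLossDeriv (θ : ℝ) (y : Fin n → ℝ) :
    gradComp n p θ x y
      = fun β => (1 / (n : ℝ)) • ∑ i, nbLossDeriv θ (y i) (x i ⬝ᵥ β) • x i := by
  funext β j
  simp only [gradComp, Pi.smul_apply, Finset.sum_apply, smul_eq_mul]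
  congr 1
  refine Finset.sum_congr rfl fun i _ => ?_
  simp only [nbLossDeriv, dotp, dotProduct]
  ring

theorem hasGradientField_negLogLik (hθ : 0 < θ) (y : Fin n → ℝ) :
    HasGradientField (negLogLik n p θ x y) (gradComp n p θ x y) := by
  rw [negLogLik_eq_mul_sum_nbLoss, gradComp_eq_smul_sum_nbLossDeriv]
  exact hasGradientField_mul_sum_comp_dotProduct _ x fun i s => hasDerivAt_nbLoss hθ (y i) s

theorem isMonotoneOperator_gradComp (hθ : 0 < θ) (hy : ∀ i, 0 ≤ y i) :
    IsMonotoneOperator (gradComp n p θ x y) := by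
  rw [gradComp_eq_smul_sum_nbLossDeriv]
  exact isMonotoneOperator_smul_sum_comp_dotProduct (by positivity) x
    fun i => monotone_nbLossDeriv hθ (hy i)

end NegativeBinomial

theorem stmt3
    (n p : ℕ) (hn : 1 ≤ n) (hp : 1 ≤ p)
    (θ : ℝ) (hθ : 0 < θ)
    (x : Fin n → Fin p → ℝ) (y : Fin n → ℝ) (hy : ∀ i, 0 ≤ y i)
    (lam1 lam2 : ℝ) (hlam1 : 0 < lam1) (hlam2 : 0 < lam2)
    (betah : Fin p → ℝ)
    (hmin : ∀ β : Fin p → ℝ,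
      enObj n p θ x y lam1 lam2 betah ≤ enObj n p θ x y lam1 lam2 β)
    (betas : Fin p → ℝ)
    (H : Finset (Fin p)) (hH : H = Finset.univ.filter (fun j => betas j ≠ 0))
    (zstar : ℝ)
    (hz : zstar = ⨆ j : Fin p, |gradComp n p θ x y betas j + 2 * lam2 * betas j|)
    (Δ : Fin p → ℝ) (hΔ : Δ = fun j => betah j - betas j)
    (ζ : ℝ) (hζ : 1 < ζ)
    (hzs : zstar ≤ (ζ - 1) / (ζ + 1) * lam1) :
    ((2 * lam1 / (ζ + 1)) * (∑ j ∈ Hᶜ, |Δ j|) ≤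
        (∑ j, Δ j * (gradComp n p θ x y betah j - gradComp n p θ x y betas j
            + 2 * lam2 * Δ j))
          + (2 * lam1 / (ζ + 1)) * (∑ j ∈ Hᶜ, |Δ j|) ∧
      (∑ j, Δ j * (gradComp n p θ x y betah j - gradComp n p θ x y betas j
            + 2 * lam2 * Δ j))
          + (2 * lam1 / (ζ + 1)) * (∑ j ∈ Hᶜ, |Δ j|)
        ≤ (2 * ζ * lam1 / (ζ + 1)) * (∑ j ∈ H, |Δ j|)) ∧
    (∑ j ∈ Hᶜ, |Δ j|) ≤ ζ * (∑ j ∈ H, |Δ j|) := by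
  subst hz hΔ
  exact stmt3_general (hasGradientField_negLogLik x hθ y) (isMonotoneOperator_gradComp x hθ hy)
    hlam1 hlam2.le hmin (by simp [hH]) (by linarith)
    fun j => (le_ciSup (Set.finite_range _).bddAbove j).trans hzs
end

section
/- Let β̂ be the elastic-net estimator with λ₂ > 0, and let k, l ∈ {1,…,p} be such that (1/n)·∑_{i=1}^n x_{ik}² = 1 and (1/n)·∑_{i=1}^n x_{il}² = 1. With ρ_{kl} = (1/n)·∑_{i=1}^n x_{ik}·x_{il}, one has |β̂_k − β̂_l|² ≤ ((1 − ρ_{kl})/(2λ₂²)) · (1/n)·∑_{i=1}^n (exp(⟨X_i,β̂⟩) − y_i)². -/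
open Real BigOperators Finset MeasureTheory

/-! Move from `β̂` towards the vector `w` obtained by swapping its coordinates `k` and `l`; unlike a
comparison of the two stationarity conditions, this needs no case analysis on signs. The elastic-net
penalty takes equal values at `β̂` and `w`, so strong convexity makes it drop by at least
`s (1 - s) λ₂ ‖w - β̂‖²` at `β̂ + s (w - β̂)`; minimality forces the loss to rise by at least as
much. As `s → 0` this gives `2 λ₂ (β̂ₗ - β̂ₖ)² ≤ (β̂ₗ - β̂ₖ) · (1/n) ∑ rᵢ (xᵢₖ - xᵢₗ)`, where `rᵢ`
is the derivative of the `i`-th loss, and the theorem follows by Cauchy–Schwarz and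
`|rᵢ| ≤ |exp ⟨Xᵢ, β̂⟩ - yᵢ|`. -/

theorem sq_div_add_mul_le_sq {K : Type*} [Field K] [LinearOrder K] [IsStrictOrderedRing K] {a m : K}
    (ha : 0 ≤ a) (hm : 0 ≤ m) (z : K) : (a / (a + m) * z) ^ 2 ≤ z ^ 2 := by
  have hshrink : a / (a + m) ≤ 1 := div_le_one_of_le₀ (by linarith) (by positivity)
  rw [mul_pow]
  exact mul_le_of_le_one_left (sq_nonneg z) (pow_le_one₀ (by positivity) hshrink)

theorem sq_mul_le_sq_of_mul_sq_le_mul {R : Type*} [CommRing R] [LinearOrder R]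
    [IsStrictOrderedRing R] {a d m : R} (ha : 0 ≤ a) (h : a * d ^ 2 ≤ d * m) :
    (a * d) ^ 2 ≤ m ^ 2 := by
  rcases eq_or_ne d 0 with rfl | hd
  · simpa using sq_nonneg m
  have habs : |d| * |a * d| ≤ |d| * |m| :=
    calc |d| * |a * d| = a * d ^ 2 := by rw [abs_mul, abs_of_nonneg ha, ← sq_abs d]; ring
      _ ≤ d * m := h
      _ ≤ |d| * |m| := (le_abs_self _).trans_eq (abs_mul d m)
  exact sq_le_sq.2 (le_of_mul_le_mul_left habs (abs_pos.2 hd))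

section LocalMin

open Filter Topology

variable {E : Type*} [AddCommGroup E] [Module ℝ E] [TopologicalSpace E] [ContinuousAdd E]
  [ContinuousSMul ℝ E]

theorem tendsto_add_smul_nhdsGT_zero (b v : E) :
    Tendsto (fun s : ℝ ↦ b + s • v) (𝓝[>] 0) (𝓝 b) := by
  have hcont : Continuous fun s : ℝ ↦ b + s • v := by fun_prop
  simpa using (hcont.tendsto 0).mono_left nhdsWithin_le_nhds

theorem le_of_isLocalMin_add_of_hasLineDerivAt {L R : E → ℝ} {b v : E} {c D : ℝ}
    (hmin : IsLocalMin (fun β ↦ L β + R β) b) (hL : HasLineDerivAt ℝ L D b v)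
    (hR : ∀ s ∈ Set.Icc (0 : ℝ) 1, R (b + s • v) ≤ R b - s * (1 - s) * c) :
    c ≤ D := by
  have hlower : Tendsto (fun s : ℝ ↦ (1 - s) * c) (𝓝[>] 0) (𝓝 c) := by
    have hcont : Continuous fun s : ℝ ↦ (1 - s) * c := by fun_prop
    simpa using (hcont.tendsto 0).mono_left nhdsWithin_le_nhds
  refine le_of_tendsto_of_tendsto hlower hL.tendsto_slope_zero_right ?_
  filter_upwards [(tendsto_add_smul_nhdsGT_zero b v).eventually hmin,
    Ioo_mem_nhdsGT zero_lt_one] with s hs ⟨hs0, hs1⟩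
  have hdrop := hR s ⟨hs0.le, hs1.le⟩
  rw [smul_eq_mul, le_inv_mul_iff₀ hs0]
  linarith

end LocalMin

section Swap

variable {ι R : Type*} [DecidableEq ι] [CommRing R]

theorem comp_swap_sub_self (b : ι → R) (k l : ι) :
    b ∘ Equiv.swap k l - b = (b l - b k) • (Pi.single k 1 - Pi.single l 1) := by
  ext j
  rcases eq_or_ne j k with rfl | hk <;> rcases eq_or_ne j l with rfl | hl <;>
    simp [Equiv.swap_apply_of_ne_of_ne, *]

variable [Fintype ι]

theorem dotProduct_comp_swap_sub_self (u b : ι → R) (k l : ι) :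
    u ⬝ᵥ (b ∘ Equiv.swap k l - b) = (b l - b k) * (u k - u l) := by
  simp [comp_swap_sub_self, dotProduct_sub]

theorem comp_swap_sub_self_dotProduct_self (b : ι → R) (k l : ι) :
    (b ∘ Equiv.swap k l - b) ⬝ᵥ (b ∘ Equiv.swap k l - b) = 2 * (b l - b k) ^ 2 := by
  rw [dotProduct_comp_swap_sub_self]
  simp only [Pi.sub_apply, Function.comp_apply, Equiv.swap_apply_left, Equiv.swap_apply_right]
  ring

end Swap

section Sums

variable {ι R : Type*} [Fintype ι] [CommRing R]

theorem sum_abs_add_smul_sub_le [LinearOrder R] [IsStrictOrderedRing R] (b w : ι → R) {s : R}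
    (hs : s ∈ Set.Icc 0 1) :
    ∑ j, |(b + s • (w - b)) j| ≤ (1 - s) * ∑ j, |b j| + s * ∑ j, |w j| := by
  rw [mul_sum, mul_sum, ← sum_add_distrib]
  refine sum_le_sum fun j _ ↦ ?_
  calc |(b + s • (w - b)) j| = |(1 - s) * b j + s * w j| := by
        simp only [Pi.add_apply, Pi.smul_apply, Pi.sub_apply, smul_eq_mul]; ring_nf
    _ ≤ |(1 - s) * b j| + |s * w j| := abs_add_le _ _
    _ = (1 - s) * |b j| + s * |w j| := by
        rw [abs_mul, abs_mul, abs_of_nonneg (sub_nonneg.2 hs.2), abs_of_nonneg hs.1]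

theorem sum_sq_add_smul_sub (b w : ι → R) (s : R) :
    ∑ j, (b + s • (w - b)) j ^ 2 =
      (1 - s) * ∑ j, b j ^ 2 + s * ∑ j, w j ^ 2 - s * (1 - s) * ((w - b) ⬝ᵥ (w - b)) := by
  simp only [dotProduct, mul_sum, ← sum_add_distrib, ← sum_sub_distrib]
  refine sum_congr rfl fun j _ ↦ ?_
  simp only [Pi.add_apply, Pi.smul_apply, Pi.sub_apply, smul_eq_mul]
  ring

theorem mul_sum_sq_sub_eq {u v : ι → R} {c : R} (hu : c * ∑ i, u i ^ 2 = 1)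
    (hv : c * ∑ i, v i ^ 2 = 1) :
    c * ∑ i, (u i - v i) ^ 2 = 2 * (1 - c * ∑ i, u i * v i) := by
  calc c * ∑ i, (u i - v i) ^ 2
      = c * ∑ i, u i ^ 2 + c * ∑ i, v i ^ 2 - 2 * (c * ∑ i, u i * v i) := by
        simp only [mul_sum, ← sum_add_distrib, ← sum_sub_distrib]
        exact sum_congr rfl fun i _ ↦ by ring
    _ = 2 * (1 - c * ∑ i, u i * v i) := by rw [hu, hv]; ring

end Sums

section ElasticNetPenalty

variable {ι : Type*} [Fintype ι]

/-- The elastic-net penalty `λ₁ ‖β‖₁ + λ₂ ‖β‖₂²`. The norms are written as sums because the norm of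
`ι → ℝ` is the sup norm. -/
def elasticNetPenalty (lam1 lam2 : ℝ) (β : ι → ℝ) : ℝ :=
  lam1 * ∑ j, |β j| + lam2 * ∑ j, β j ^ 2

theorem elasticNetPenalty_comp_perm (lam1 lam2 : ℝ) (β : ι → ℝ) (σ : Equiv.Perm ι) :
    elasticNetPenalty lam1 lam2 (β ∘ σ) = elasticNetPenalty lam1 lam2 β := by
  simp only [elasticNetPenalty, Function.comp_apply, Equiv.sum_comp σ fun j ↦ |β j|,
    Equiv.sum_comp σ fun j ↦ β j ^ 2]

theorem elasticNetPenalty_add_smul_sub_le {lam1 : ℝ} (hlam1 : 0 ≤ lam1) (lam2 : ℝ) (b w : ι → ℝ)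
    {s : ℝ} (hs : s ∈ Set.Icc (0 : ℝ) 1) :
    elasticNetPenalty lam1 lam2 (b + s • (w - b)) ≤
      (1 - s) * elasticNetPenalty lam1 lam2 b + s * elasticNetPenalty lam1 lam2 w -
        s * (1 - s) * (lam2 * ((w - b) ⬝ᵥ (w - b))) := by
  have habs := mul_le_mul_of_nonneg_left (sum_abs_add_smul_sub_le b w hs) hlam1
  simp only [elasticNetPenalty, sum_sq_add_smul_sub]
  linarith

end ElasticNetPenalty

section GroupingEffect

variable {ι κ : Type*} [Fintype ι] [Fintype κ] {x : κ → ι → ℝ} {f : κ → ℝ → ℝ} {r : κ → ℝ}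
  {b : ι → ℝ} {c lam1 lam2 : ℝ}

theorem hasLineDerivAt_sum_comp_dotProduct (hf : ∀ i, HasDerivAt (f i) (r i) (x i ⬝ᵥ b)) (c : ℝ)
    (v : ι → ℝ) :
    HasLineDerivAt ℝ (fun β ↦ c * ∑ i, f i (x i ⬝ᵥ β)) (c * ∑ i, r i * (x i ⬝ᵥ v)) b v := by
  refine HasDerivAt.const_mul c (HasDerivAt.fun_sum fun i _ ↦ ?_)
  have hline : HasDerivAt (fun s : ℝ ↦ x i ⬝ᵥ (b + s • v)) (x i ⬝ᵥ v) 0 := by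
    simpa [dotProduct_add] using
      ((hasDerivAt_id (0 : ℝ)).mul_const (x i ⬝ᵥ v)).const_add (x i ⬝ᵥ b)
  exact HasDerivAt.comp (0 : ℝ) (by simpa using hf i) hline

theorem two_mul_sq_sub_le_of_isLocalMin (hf : ∀ i, HasDerivAt (f i) (r i) (x i ⬝ᵥ b))
    (hlam1 : 0 ≤ lam1)
    (hmin : IsLocalMin (fun β ↦ c * ∑ i, f i (x i ⬝ᵥ β) + elasticNetPenalty lam1 lam2 β) b)
    (k l : ι) :
    2 * lam2 * (b l - b k) ^ 2 ≤ (b l - b k) * (c * ∑ i, r i * (x i k - x i l)) := by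
  classical
  set w := b ∘ Equiv.swap k l
  have hdrop : ∀ s ∈ Set.Icc (0 : ℝ) 1, elasticNetPenalty lam1 lam2 (b + s • (w - b)) ≤
      elasticNetPenalty lam1 lam2 b - s * (1 - s) * (lam2 * ((w - b) ⬝ᵥ (w - b))) := fun s hs ↦ by
    have hconv := elasticNetPenalty_add_smul_sub_le hlam1 lam2 b w hs
    rw [elasticNetPenalty_comp_perm] at hconv
    linarith
  calc 2 * lam2 * (b l - b k) ^ 2 = lam2 * ((w - b) ⬝ᵥ (w - b)) := by
        rw [comp_swap_sub_self_dotProduct_self]; ring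
    _ ≤ c * ∑ i, r i * (x i ⬝ᵥ (w - b)) :=
        le_of_isLocalMin_add_of_hasLineDerivAt hmin
          (hasLineDerivAt_sum_comp_dotProduct hf c _) hdrop
    _ = (b l - b k) * (c * ∑ i, r i * (x i k - x i l)) := by
        simp only [w, dotProduct_comp_swap_sub_self, mul_sum]
        exact sum_congr rfl fun i _ ↦ by ring

theorem sq_mul_sub_le_of_isLocalMin (hf : ∀ i, HasDerivAt (f i) (r i) (x i ⬝ᵥ b))
    (hlam1 : 0 ≤ lam1) (hlam2 : 0 ≤ lam2)
    (hmin : IsLocalMin (fun β ↦ c * ∑ i, f i (x i ⬝ᵥ β) + elasticNetPenalty lam1 lam2 β) b)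
    (k l : ι) :
    (2 * lam2 * (b l - b k)) ^ 2 ≤ (c * ∑ i, (x i k - x i l) ^ 2) * (c * ∑ i, r i ^ 2) := by
  calc (2 * lam2 * (b l - b k)) ^ 2 ≤ (c * ∑ i, r i * (x i k - x i l)) ^ 2 :=
        sq_mul_le_sq_of_mul_sq_le_mul (by positivity)
          (two_mul_sq_sub_le_of_isLocalMin hf hlam1 hmin k l)
    _ = c ^ 2 * (∑ i, r i * (x i k - x i l)) ^ 2 := mul_pow _ _ 2
    _ ≤ c ^ 2 * ((∑ i, r i ^ 2) * ∑ i, (x i k - x i l) ^ 2) := by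
        gcongr
        exact sum_mul_sq_le_sq_mul_sq _ _ _
    _ = (c * ∑ i, (x i k - x i l) ^ 2) * (c * ∑ i, r i ^ 2) := by ring

end GroupingEffect

section NegativeBinomial

/-- The negative binomial negative log-likelihood of a single response `y` as a function of the
linear predictor `η`, without the terms that do not depend on `η`. -/
noncomputable def negBinLoss (θ y η : ℝ) : ℝ :=
  (θ + y) * Real.log (θ + Real.exp η) - y * η

theorem dotp_eq_dotProduct {p : ℕ} (u v : Fin p → ℝ) : dotp u v = u ⬝ᵥ v :=
  rfl

theorem negLogLik_eq_sum_negBinLoss (n p : ℕ) (θ : ℝ) (x : Fin n → Fin p → ℝ) (y : Fin n → ℝ)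
    (β : Fin p → ℝ) :
    negLogLik n p θ x y β = 1 / (n : ℝ) * ∑ i, negBinLoss θ (y i) (x i ⬝ᵥ β) := by
  simp only [negLogLik, negBinLoss, dotp_eq_dotProduct, neg_mul, ← mul_neg, ← sum_neg_distrib,
    neg_sub]

theorem enObj_eq_sum_negBinLoss_add_elasticNetPenalty (n p : ℕ) (θ : ℝ) (x : Fin n → Fin p → ℝ)
    (y : Fin n → ℝ) (lam1 lam2 : ℝ) :
    enObj n p θ x y lam1 lam2 = fun β ↦
      1 / (n : ℝ) * ∑ i, negBinLoss θ (y i) (x i ⬝ᵥ β) + elasticNetPenalty lam1 lam2 β := by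
  ext β
  rw [enObj, negLogLik_eq_sum_negBinLoss, add_assoc, elasticNetPenalty]

theorem hasDerivAt_negBinLoss {θ : ℝ} (hθ : 0 ≤ θ) (y η : ℝ) :
    HasDerivAt (negBinLoss θ y) (θ / (θ + Real.exp η) * (Real.exp η - y)) η := by
  have hne : θ + Real.exp η ≠ 0 := by positivity
  have hlog : HasDerivAt (fun t ↦ Real.log (θ + Real.exp t))
      (Real.exp η / (θ + Real.exp η)) η :=
    ((Real.hasDerivAt_exp η).const_add θ).log hne
  refine ((hlog.const_mul (θ + y)).sub ((hasDerivAt_id η).const_mul y)).congr_deriv ?_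
  field_simp
  ring

end NegativeBinomial

theorem stmt15_general
    (n p : ℕ) (θ : ℝ) (hθ : 0 ≤ θ)
    (x : Fin n → Fin p → ℝ) (y : Fin n → ℝ)
    (lam1 lam2 : ℝ) (hlam1 : 0 ≤ lam1) (hlam2 : 0 < lam2)
    (betah : Fin p → ℝ) (hmin : IsLocalMin (enObj n p θ x y lam1 lam2) betah)
    (k l : Fin p)
    (hknorm : (1 / (n : ℝ)) * ∑ i, (x i k) ^ 2 = 1)
    (hlnorm : (1 / (n : ℝ)) * ∑ i, (x i l) ^ 2 = 1)
    (ρ : ℝ) (hρ : ρ = (1 / (n : ℝ)) * ∑ i, x i k * x i l) :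
    |betah k - betah l| ^ 2 ≤ ((1 - ρ) / (2 * lam2 ^ 2)) *
      ((1 / (n : ℝ)) * ∑ i, (Real.exp (dotp (x i) betah) - y i) ^ 2) := by
  rw [enObj_eq_sum_negBinLoss_add_elasticNetPenalty] at hmin
  have hgroup := sq_mul_sub_le_of_isLocalMin
    (fun i ↦ hasDerivAt_negBinLoss hθ (y i) (x i ⬝ᵥ betah)) hlam1 hlam2.le hmin k l
  have hcorr : 1 / (n : ℝ) * ∑ i, (x i k - x i l) ^ 2 = 2 * (1 - ρ) :=
    hρ ▸ mul_sum_sq_sub_eq hknorm hlnorm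
  have hcorr_nonneg : 0 ≤ 2 * (1 - ρ) := hcorr ▸ by positivity
  have hbound : (2 * lam2 * (betah l - betah k)) ^ 2 ≤ 2 * (1 - ρ) *
      (1 / (n : ℝ) * ∑ i, (Real.exp (dotp (x i) betah) - y i) ^ 2) := by
    rw [hcorr] at hgroup
    refine hgroup.trans ?_
    simp only [dotp_eq_dotProduct]
    gcongr ?_ * (_ * ?_)
    exact sum_le_sum fun i _ ↦ sq_div_add_mul_le_sq hθ (Real.exp_pos _).le _
  rw [sq_abs, div_mul_eq_mul_div, le_div_iff₀ (by positivity)]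
  linarith

theorem stmt15
    (n p : ℕ) (hn : 1 ≤ n) (hp : 1 ≤ p)
    (θ : ℝ) (hθ : 0 < θ)
    (x : Fin n → Fin p → ℝ) (y : Fin n → ℝ) (hy : ∀ i, 0 ≤ y i)
    (lam1 lam2 : ℝ) (hlam1 : 0 < lam1) (hlam2 : 0 < lam2)
    (betah : Fin p → ℝ)
    (hmin : ∀ β : Fin p → ℝ,
      enObj n p θ x y lam1 lam2 betah ≤ enObj n p θ x y lam1 lam2 β)
    (k l : Fin p)
    (hknorm : (1 / (n : ℝ)) * ∑ i, (x i k) ^ 2 = 1)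
    (hlnorm : (1 / (n : ℝ)) * ∑ i, (x i l) ^ 2 = 1)
    (ρ : ℝ) (hρ : ρ = (1 / (n : ℝ)) * ∑ i, x i k * x i l) :
    |betah k - betah l| ^ 2 ≤ ((1 - ρ) / (2 * lam2 ^ 2)) *
      ((1 / (n : ℝ)) * ∑ i, (Real.exp (dotp (x i) betah) - y i) ^ 2) :=
  stmt15_general n p θ hθ.le x y lam1 lam2 hlam1.le hlam2 betah (.of_forall hmin) k l
    hknorm hlnorm ρ hρ
end
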